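/- arXiv:1608.06375 — 2 statements merged into one kernel-verified Lean document; each statement's English description precedes it below -/
import Mathlib

section
/- For every infinitely differentiable function f : ℝ → ℝ and every n ∈ ℕ, the function L^[n] f is infinitely differentiable and H(L^[n] f)(x) = L^[n](H f)(x) + 2·n·α·(L^[n] f)(x) for all x ∈ ℝ. -/
/-- The annihilation-type operator `(K f)(x) = α·f′(x) + x·f(x)`. -/
noncomputable def Kop (α : ℝ) (f : ℝ → ℝ) : ℝ → ℝ := fun x => α * deriv f x + x * f x

/-- The creation-type operator `(L f)(x) = −α·f′(x) + x·f(x)`. -/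
noncomputable def Lop (α : ℝ) (f : ℝ → ℝ) : ℝ → ℝ := fun x => -α * deriv f x + x * f x

/-- The harmonic oscillator `(H f)(x) = −α²·f″(x) + x²·f(x)`. -/
noncomputable def Hop (α : ℝ) (f : ℝ → ℝ) : ℝ → ℝ :=
  fun x => -α ^ 2 * deriv (deriv f) x + x ^ 2 * f x

/-- The Gaussian ground state `f₀(x) = exp(−x²/(2α))`. -/
noncomputable def hermiteF₀ (α : ℝ) : ℝ → ℝ := fun x => Real.exp (-(x ^ 2) / (2 * α))

/-- The Hermite-type functions `f_n = L^[n] f₀`. -/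
noncomputable def hermiteF (α : ℝ) (n : ℕ) : ℝ → ℝ := (Lop α)^[n] (hermiteF₀ α)

/-!
The oscillator factors through the ladder operators: `K L = H + α` and `L K = H - α`. Hence
`H L = (L K + α) L = L (K L) + α L = L (H + α) + α L = L H + 2 α L`, and moving `H` past each of
the `n` copies of `L` in `L^[n]` contributes one term `2 α L^[n]`. Each `L` costs one derivative
and `H` costs two, hence the regularity `n + 2`.

Replacing `α` by `-α` swaps `K` and `L` and fixes `H`, which exchanges the two factorizations.
-/

section

variable {α : ℝ} {f g : ℝ → ℝ} {k : WithTop ℕ∞} {n : ℕ}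

theorem contDiff_lop (hf : ContDiff ℝ (k + 1) f) : ContDiff ℝ k (Lop α f) :=
  (contDiff_const.mul hf.deriv').add (contDiff_id.mul (hf.of_le le_self_add))

theorem contDiff_hop (hf : ContDiff ℝ (k + 2) f) : ContDiff ℝ k (Hop α f) := by
  have hf₂ : ContDiff ℝ (k + 1 + 1) f := by rwa [add_assoc, one_add_one_eq_two]
  exact (contDiff_const.mul hf₂.deriv'.deriv').add
    ((contDiff_id.pow 2).mul (hf.of_le le_self_add))

theorem contDiff_iterate_lop (hf : ContDiff ℝ (k + n) f) : ContDiff ℝ k ((Lop α)^[n] f) := by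
  induction n generalizing k with
  | zero => simpa using hf
  | succ n ih =>
    rw [Function.iterate_succ_apply']
    refine contDiff_lop (ih ?_)
    rwa [add_assoc, add_comm 1, ← Nat.cast_add_one]

theorem lop_add_smul (c : ℝ) (hf : Differentiable ℝ f) (hg : Differentiable ℝ g) :
    Lop α (f + c • g) = Lop α f + c • Lop α g := by
  ext x
  have hderiv : deriv (f + c • g) x = deriv f x + c * deriv g x :=
    ((hf x).hasDerivAt.add ((hg x).hasDerivAt.const_smul c)).deriv
  simp only [Lop, hderiv, Pi.add_apply, Pi.smul_apply, smul_eq_mul]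
  ring

theorem kop_lop (hf : ContDiff ℝ 2 f) : Kop α (Lop α f) = Hop α f + α • f := by
  ext x
  have hf₁ : HasDerivAt f (deriv f x) x := (hf.differentiable two_ne_zero x).hasDerivAt
  have hf₂ : HasDerivAt (deriv f) (deriv (deriv f) x) x :=
    (hf.differentiable_deriv_two x).hasDerivAt
  have hderiv : deriv (Lop α f) x = -α * deriv (deriv f) x + (1 * f x + x * deriv f x) :=
    ((hf₂.const_mul (-α)).add ((hasDerivAt_id' x).mul hf₁)).deriv
  simp only [Kop, hderiv, Lop, Hop, Pi.add_apply, Pi.smul_apply, smul_eq_mul]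
  ring

theorem kop_neg : Kop (-α) = Lop α := rfl

theorem lop_neg : Lop (-α) = Kop α := by
  rw [← kop_neg, neg_neg]

theorem hop_neg : Hop (-α) = Hop α := by
  ext f x
  simp only [Hop, neg_sq]

theorem lop_kop (hf : ContDiff ℝ 2 f) : Lop α (Kop α f) = Hop α f - α • f := by
  simpa only [kop_neg, lop_neg, hop_neg, neg_smul, ← sub_eq_add_neg] using kop_lop (α := -α) hf

theorem hop_lop (hf : ContDiff ℝ 3 f) :
    Hop α (Lop α f) = Lop α (Hop α f) + (2 * α) • Lop α f := by
  have hf₂ : ContDiff ℝ 2 f := hf.of_le (by norm_num)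
  have hLf : ContDiff ℝ 2 (Lop α f) := contDiff_lop (hf.of_le (by norm_num))
  have hHf : ContDiff ℝ 1 (Hop α f) := contDiff_hop (hf.of_le (by norm_num))
  calc Hop α (Lop α f)
      = Lop α (Kop α (Lop α f)) + α • Lop α f := by rw [lop_kop hLf, sub_add_cancel]
    _ = Lop α (Hop α f + α • f) + α • Lop α f := by rw [kop_lop hf₂]
    _ = Lop α (Hop α f) + α • Lop α f + α • Lop α f := by
      rw [lop_add_smul α (hHf.differentiable one_ne_zero) (hf₂.differentiable two_ne_zero)]
    _ = Lop α (Hop α f) + (2 * α) • Lop α f := by rw [add_assoc, ← add_smul, two_mul]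

theorem hop_iterate_lop (hf : ContDiff ℝ (n + 2) f) :
    Hop α ((Lop α)^[n] f) = (Lop α)^[n] (Hop α f) + (2 * n * α) • (Lop α)^[n] f := by
  induction n with
  | zero => simp
  | succ n ih =>
    have hf' : ContDiff ℝ (1 + n + 2) f := by rwa [add_comm 1, ← Nat.cast_add_one]
    have hLf : ContDiff ℝ 3 ((Lop α)^[n] f) :=
      contDiff_iterate_lop (hf'.of_le (le_of_eq (by ring)))
    have hLHf : ContDiff ℝ 1 ((Lop α)^[n] (Hop α f)) := contDiff_iterate_lop (contDiff_hop hf')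
    have ih := ih (hf'.of_le (by gcongr; exact le_add_self))
    simp only [Function.iterate_succ_apply']
    set g := (Lop α)^[n] f
    set h := (Lop α)^[n] (Hop α f)
    calc Hop α (Lop α g)
        = Lop α (h + (2 * n * α) • g) + (2 * α) • Lop α g := by rw [hop_lop hLf, ih]
      _ = Lop α h + (2 * n * α) • Lop α g + (2 * α) • Lop α g := by
        rw [lop_add_smul _ (hLHf.differentiable one_ne_zero) (hLf.differentiable three_ne_zero)]
      _ = Lop α h + (2 * ↑(n + 1) * α) • Lop α g := by
        push_cast
        module

end

theorem statement4_general (α : ℝ) (f : ℝ → ℝ) (n : ℕ) {k : WithTop ℕ∞} (hk : 2 ≤ k)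
    (hf : ContDiff ℝ (k + n) f) :
    ContDiff ℝ k ((Lop α)^[n] f) ∧
      ∀ x : ℝ, Hop α ((Lop α)^[n] f) x
        = (Lop α)^[n] (Hop α f) x + 2 * (n : ℝ) * α * ((Lop α)^[n] f) x := by
  have hf' : ContDiff ℝ (n + 2) f := hf.of_le (by rw [add_comm]; gcongr)
  exact ⟨contDiff_iterate_lop hf, congrFun (hop_iterate_lop hf')⟩

/-- For every infinitely differentiable `f : ℝ → ℝ` and every `n`, the function
`L^[n] f` is infinitely differentiable and `H(L^[n] f) = L^[n](H f) + 2·n·α·(L^[n] f)`. -/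
theorem statement4 (α : ℝ) (hα : 0 < α) (f : ℝ → ℝ) (hf : ContDiff ℝ (⊤ : ℕ∞) f) (n : ℕ) :
    ContDiff ℝ (⊤ : ℕ∞) ((Lop α)^[n] f) ∧
      ∀ x : ℝ, Hop α ((Lop α)^[n] f) x
        = (Lop α)^[n] (Hop α f) x + 2 * (n : ℝ) * α * ((Lop α)^[n] f) x :=
  -- `∞ + n` is `∞` definitionally, so `hf` has the required type.
  statement4_general α f n ENat.LEInfty.out hf
end

section
/- For all natural numbers m ≠ n, the eigenfunctions f_m and f_n are orthogonal in L²(ℝ): the Lebesgue integral ∫_ℝ f_m(x)·f_n(x) dx equals 0. -/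
open MeasureTheory

/-!
In `L²(ℝ)` the operators `K` and `L` are adjoint to each other. On a polynomial times `f₀` they
act through the polynomial: `L` raises its degree by at most one, while `K` becomes `α · d/dx`. So
`f_n` is `f₀` times a polynomial of degree at most `n`, and moving the `m` factors of `L` in
`f_m = L^m f₀` onto it differentiates that polynomial `m` times, which kills it as soon as `n < m`.
-/

open Polynomial

/-- The product of the polynomial `p` and the ground state `f₀`. For `0 < α` these products
form a space of rapidly decaying functions that is stable under `K` and `L` and contains every
`f_n`. -/
noncomputable def polyGaussian (α : ℝ) (p : ℝ[X]) : ℝ → ℝ := fun x => p.eval x * hermiteF₀ α x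

/-- The Hermite polynomials, in the normalization for which, when `α ≠ 0`, `f_n` is the `n`-th one
times `f₀`. -/
noncomputable def hermitePoly (α : ℝ) : ℕ → ℝ[X]
  | 0 => 1
  | n + 1 => 2 * X * hermitePoly α n - C α * derivative (hermitePoly α n)

theorem integral_Lop_mul_eq_integral_mul_Kop (α : ℝ) {f g : ℝ → ℝ}
    (hf : Differentiable ℝ f) (hg : Differentiable ℝ g)
    (hf'g : Integrable fun x => deriv f x * g x) (hfg' : Integrable fun x => f x * deriv g x)
    (hfg : Integrable fun x => f x * g x) (hxfg : Integrable fun x => x * f x * g x) :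
    ∫ x, Lop α f x * g x = ∫ x, f x * Kop α g x := by
  have parts : ∫ x, f x * deriv g x = -∫ x, deriv f x * g x :=
    integral_mul_deriv_eq_deriv_mul_of_integrable (fun x _ => (hf x).hasDerivAt)
      (fun x _ => (hg x).hasDerivAt) hfg' hf'g hfg
  calc ∫ x, Lop α f x * g x
      = ∫ x, (-α * (deriv f x * g x) + x * f x * g x) := by
        congr with x; rw [Lop]; ring
    _ = -α * (∫ x, deriv f x * g x) + ∫ x, x * f x * g x := by
        rw [integral_add (hf'g.const_mul _) hxfg, integral_const_mul]
    _ = α * (∫ x, f x * deriv g x) + ∫ x, x * f x * g x := by rw [parts]; ring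
    _ = ∫ x, (α * (f x * deriv g x) + x * f x * g x) := by
        rw [integral_add (hfg'.const_mul _) hxfg, integral_const_mul]
    _ = ∫ x, f x * Kop α g x := by
        congr with x; rw [Kop]; ring

theorem integrable_eval_mul_exp_neg_mul_sq {b : ℝ} (hb : 0 < b) (p : ℝ[X]) :
    Integrable fun x => p.eval x * Real.exp (-b * x ^ 2) := by
  induction p using Polynomial.induction_on' with
  | add p q hp hq => simpa only [eval_add, add_mul] using hp.fun_add hq
  | monomial k a =>
    have hk : (-1 : ℝ) < k := neg_one_lt_zero.trans_le k.cast_nonneg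
    simpa only [eval_monomial, mul_assoc, Real.rpow_natCast] using
      (integrable_rpow_mul_exp_neg_mul_sq hb hk).const_mul a

theorem hasDerivAt_hermiteF₀ (α x : ℝ) :
    HasDerivAt (hermiteF₀ α) (-(x / α) * hermiteF₀ α x) x := by
  have h : HasDerivAt (fun y : ℝ => -(y ^ 2) / (2 * α)) (-(x / α)) x :=
    ((hasDerivAt_pow 2 x).fun_neg.div_const (2 * α)).congr_deriv (by push_cast; ring)
  exact h.exp.congr_deriv (mul_comm _ _)

theorem hasDerivAt_polyGaussian (α : ℝ) (p : ℝ[X]) (x : ℝ) :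
    HasDerivAt (polyGaussian α p) (polyGaussian α (derivative p - C α⁻¹ * X * p) x) x := by
  refine ((p.hasDerivAt x).mul (hasDerivAt_hermiteF₀ α x)).congr_deriv ?_
  simp only [polyGaussian, eval_sub, eval_mul, eval_C, eval_X]
  ring

theorem deriv_polyGaussian (α : ℝ) (p : ℝ[X]) :
    deriv (polyGaussian α p) = polyGaussian α (derivative p - C α⁻¹ * X * p) :=
  deriv_eq (hasDerivAt_polyGaussian α p)

theorem differentiable_polyGaussian (α : ℝ) (p : ℝ[X]) : Differentiable ℝ (polyGaussian α p) :=
  fun x => (hasDerivAt_polyGaussian α p x).differentiableAt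

theorem mul_polyGaussian_apply (α : ℝ) (p : ℝ[X]) (x : ℝ) :
    x * polyGaussian α p x = polyGaussian α (X * p) x := by
  simp only [polyGaussian, eval_mul, eval_X, mul_assoc]

theorem Kop_polyGaussian {α : ℝ} (hα : α ≠ 0) (p : ℝ[X]) :
    Kop α (polyGaussian α p) = polyGaussian α (C α * derivative p) := by
  ext x
  simp only [Kop, deriv_polyGaussian, polyGaussian, eval_sub, eval_mul, eval_C, eval_X]
  field_simp
  ring

theorem Lop_polyGaussian {α : ℝ} (hα : α ≠ 0) (p : ℝ[X]) :
    Lop α (polyGaussian α p) = polyGaussian α (2 * X * p - C α * derivative p) := by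
  ext x
  simp only [Lop, deriv_polyGaussian, polyGaussian, eval_sub, eval_mul, eval_C, eval_X,
    eval_ofNat]
  field_simp
  ring

theorem integrable_polyGaussian_mul_polyGaussian {α : ℝ} (hα : 0 < α) (p q : ℝ[X]) :
    Integrable fun x => polyGaussian α p x * polyGaussian α q x := by
  have mul_eq (x : ℝ) : polyGaussian α p x * polyGaussian α q x =
      (p * q).eval x * Real.exp (-α⁻¹ * x ^ 2) := by
    simp only [polyGaussian, hermiteF₀]
    rw [mul_mul_mul_comm, ← eval_mul, ← Real.exp_add]
    ring_nf
  simpa only [mul_eq] using integrable_eval_mul_exp_neg_mul_sq (inv_pos.mpr hα) (p * q)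

theorem integral_Lop_polyGaussian_mul {α : ℝ} (hα : 0 < α) (p q : ℝ[X]) :
    ∫ x, Lop α (polyGaussian α p) x * polyGaussian α q x =
      ∫ x, polyGaussian α p x * Kop α (polyGaussian α q) x := by
  apply integral_Lop_mul_eq_integral_mul_Kop α (differentiable_polyGaussian α p)
    (differentiable_polyGaussian α q) <;>
    simp only [deriv_polyGaussian, mul_polyGaussian_apply,
      integrable_polyGaussian_mul_polyGaussian hα]

theorem hermiteF_succ (α : ℝ) (n : ℕ) : hermiteF α (n + 1) = Lop α (hermiteF α n) :=
  Function.iterate_succ_apply' _ _ _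

theorem hermiteF_eq_polyGaussian_hermitePoly {α : ℝ} (hα : α ≠ 0) (n : ℕ) :
    hermiteF α n = polyGaussian α (hermitePoly α n) := by
  induction n with
  | zero => ext x; simp [hermiteF, polyGaussian, hermitePoly]
  | succ n ih => rw [hermiteF_succ, ih, Lop_polyGaussian hα, hermitePoly]

theorem natDegree_hermitePoly_le (α : ℝ) (n : ℕ) : (hermitePoly α n).natDegree ≤ n := by
  induction n with
  | zero => simp [hermitePoly]
  | succ n ih =>
    rw [hermitePoly]
    have raise_le : (2 * X * hermitePoly α n).natDegree ≤ n + 1 := by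
      compute_degree
      lia
    have lower_le : (C α * derivative (hermitePoly α n)).natDegree ≤ n + 1 := by
      have := natDegree_derivative_le (hermitePoly α n)
      compute_degree
      lia
    exact (natDegree_sub_le_of_le raise_le lower_le).trans_eq (max_self _)

theorem integral_hermiteF_mul_polyGaussian_eq_zero {α : ℝ} (hα : 0 < α) {m : ℕ} {p : ℝ[X]}
    (hp : p.degree < m) : ∫ x, hermiteF α m x * polyGaussian α p x = 0 := by
  induction m generalizing p with
  | zero =>
    have p_eq_zero : p = 0 := by simpa [Nat.WithBot.lt_zero_iff] using hp
    simp [p_eq_zero, polyGaussian]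
  | succ m ih =>
    have degree_lt : (C α * derivative p).degree < m := by
      rw [degree_lt_iff_coeff_zero] at hp ⊢
      intro k hk
      rw [coeff_C_mul, coeff_derivative, hp (k + 1) (by lia), zero_mul, mul_zero]
    rw [hermiteF_succ, hermiteF_eq_polyGaussian_hermitePoly hα.ne',
      integral_Lop_polyGaussian_mul hα, Kop_polyGaussian hα.ne',
      ← hermiteF_eq_polyGaussian_hermitePoly hα.ne']
    exact ih degree_lt

theorem integral_hermiteF_mul_hermiteF_of_lt {α : ℝ} (hα : 0 < α) {m n : ℕ} (hnm : n < m) :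
    ∫ x, hermiteF α m x * hermiteF α n x = 0 := by
  have degree_lt : (hermitePoly α n).degree < m :=
    degree_le_natDegree.trans_lt (by exact_mod_cast (natDegree_hermitePoly_le α n).trans_lt hnm)
  rw [hermiteF_eq_polyGaussian_hermitePoly hα.ne' n]
  exact integral_hermiteF_mul_polyGaussian_eq_zero hα degree_lt

/-- For `m ≠ n`, the eigenfunctions `f_m` and `f_n` are orthogonal in `L²(ℝ)`:
`∫_ℝ f_m(x)·f_n(x) dx = 0`. -/
theorem statement8 (α : ℝ) (hα : 0 < α) (m n : ℕ) (hmn : m ≠ n) :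
    ∫ x : ℝ, hermiteF α m x * hermiteF α n x = 0 := by
  rcases hmn.lt_or_gt with hlt | hgt
  · simpa only [mul_comm] using integral_hermiteF_mul_hermiteF_of_lt hα hlt
  · exact integral_hermiteF_mul_hermiteF_of_lt hα hgt
end
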